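/- arXiv:2303.10631 — 3 statements merged into one kernel-verified Lean document; each statement's English description precedes it below -/
import Mathlib

section
/- Let R be a commutative ring. The following are equivalent: (i) for every alphabet Σ, every trim bideterministic weighted automaton over R and Σ is minimal; (ii) R is trivial (0 = 1) or R is an integral domain. -/
/-- A weighted automaton over a semiring `S` and alphabet `α`:
a finite type of states `Q`, a transition weighting `σ`, an initial
weighting `ι` and a terminal weighting `τ`. -/
structure WeightedAutomaton (S : Type) [Semiring S] (α : Type) : Type 1 where
  Q : Type
  [fintypeQ : Fintype Q]
  σ : Q → α → Q → S
  ι : Q → S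
  τ : Q → S

namespace WeightedAutomaton

attribute [instance] fintypeQ

variable {S : Type} [Semiring S] {α : Type}

/-- The "future" of a state on a word: the sum, over all runs from this state
upon the word, of the product of the transition weights times the terminal
weight of the last state.  (Sequences of states using a zero-weight transition
contribute zero, so this is exactly the sum over runs.) -/
def future (A : WeightedAutomaton S α) : List α → A.Q → S
  | [], q => A.τ q
  | c :: w, q => ∑ p : A.Q, A.σ q c p * A.future w p

/-- The behaviour of a weighted automaton: the series sending each word `w`
to the sum of the monomial weights `ι(q₀)·σ(q₀,c₁,q₁)⋯σ(q_{n−1},cₙ,qₙ)·τ(qₙ)`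
of all runs of the automaton upon `w`. -/
def behaviour (A : WeightedAutomaton S α) (w : List α) : S :=
  ∑ q : A.Q, A.ι q * A.future w q

/-- A weighted automaton is bideterministic if at most one state has nonzero
initial weight, at most one state has nonzero terminal weight, and for every
letter each state has at most one outgoing and at most one incoming transition
with nonzero weight upon that letter. -/
def Bideterministic (A : WeightedAutomaton S α) : Prop :=
  (∀ p q, A.ι p ≠ 0 → A.ι q ≠ 0 → p = q) ∧
  (∀ p q, A.τ p ≠ 0 → A.τ q ≠ 0 → p = q) ∧
  (∀ p c q q', A.σ p c q ≠ 0 → A.σ p c q' ≠ 0 → q = q') ∧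
  (∀ p p' c q, A.σ p c q ≠ 0 → A.σ p' c q ≠ 0 → p = p')

/-- `A.IsPath q l` : starting in state `q`, the list `l` of (letter, next state)
pairs follows transitions all of which have nonzero weight, i.e. it is a run. -/
def IsPath (A : WeightedAutomaton S α) : A.Q → List (α × A.Q) → Prop
  | _, [] => True
  | q, (c, q') :: l => A.σ q c q' ≠ 0 ∧ A.IsPath q' l

/-- The last state of a path. -/
def pathEnd (A : WeightedAutomaton S α) : A.Q → List (α × A.Q) → A.Q
  | q, [] => q
  | _, (_, q') :: l => A.pathEnd q' l

/-- The product of the transition weights along a path. -/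
def pathWeight (A : WeightedAutomaton S α) : A.Q → List (α × A.Q) → S
  | _, [] => 1
  | q, (c, q') :: l => A.σ q c q' * A.pathWeight q' l

/-- A state is accessible if some run from a state with nonzero initial weight
ends in it. -/
def Accessible (A : WeightedAutomaton S α) (q : A.Q) : Prop :=
  ∃ p l, A.ι p ≠ 0 ∧ A.IsPath p l ∧ A.pathEnd p l = q

/-- A state is coaccessible if some run from it ends in a state with nonzero
terminal weight. -/
def Coaccessible (A : WeightedAutomaton S α) (q : A.Q) : Prop :=
  ∃ l, A.IsPath q l ∧ A.τ (A.pathEnd q l) ≠ 0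

/-- A weighted automaton is trim if all its states are accessible and
coaccessible. -/
def Trim (A : WeightedAutomaton S α) : Prop :=
  ∀ q, A.Accessible q ∧ A.Coaccessible q

/-- A weighted automaton is semantically trim if every state lies on some run
whose monomial weight is nonzero. -/
def SemanticallyTrim (A : WeightedAutomaton S α) : Prop :=
  ∀ q, ∃ p l, A.IsPath p l ∧ (q = p ∨ q ∈ l.map Prod.snd) ∧
    A.ι p * A.pathWeight p l * A.τ (A.pathEnd p l) ≠ 0

/-- The number of states of a weighted automaton. -/
def states (A : WeightedAutomaton S α) : ℕ := Fintype.card A.Q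

/-- A weighted automaton is minimal if every weighted automaton over the same
semiring and alphabet with the same behaviour has at least as many states. -/
def Minimal (A : WeightedAutomaton S α) : Prop :=
  ∀ B : WeightedAutomaton S α, B.behaviour = A.behaviour → A.states ≤ B.states

end WeightedAutomaton

namespace WeightedAutomaton

/-- Propagate a row vector of weights along a word. -/
def fwd {S : Type} [Semiring S] {α : Type} (A : WeightedAutomaton S α) :
    (A.Q → S) → List α → A.Q → S
  | x, [] => x
  | x, c :: w => A.fwd (fun q => ∑ p, x p * A.σ p c q) w

theorem sum_future_append {S : Type} [Semiring S] {α : Type} (A : WeightedAutomaton S α)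
    (u v : List α) (x : A.Q → S) :
    ∑ q, x q * A.future (u ++ v) q = ∑ q, A.fwd x u q * A.future v q := by
  induction u generalizing x with
  | nil => rfl
  | cons c u ih =>
    simp only [List.cons_append, future, fwd]
    rw [← ih]
    simp only [Finset.mul_sum, Finset.sum_mul]
    rw [Finset.sum_comm]
    simp only [mul_assoc]

theorem behaviour_append {S : Type} [Semiring S] {α : Type} (A : WeightedAutomaton S α)
    (u v : List α) :
    A.behaviour (u ++ v) = ∑ q, A.fwd A.ι u q * A.future v q :=
  sum_future_append A u v A.ι

theorem fwd_support {R : Type} [CommRing R] [IsDomain R] {α : Type}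
    (A : WeightedAutomaton R α) (hA : A.Bideterministic) (l : List (α × A.Q)) (p : A.Q)
    (x : A.Q → R) (hx : ∀ q, x q ≠ 0 ↔ q = p) (hl : A.IsPath p l) (q : A.Q) :
    A.fwd x (l.map Prod.fst) q ≠ 0 ↔ q = A.pathEnd p l := by
  induction l generalizing p x with
  | nil => exact hx q
  | cons a l ih =>
    obtain ⟨c, r⟩ := a
    obtain ⟨h1, h2⟩ := hl
    refine ih r _ (fun s => ?_) h2
    have hs : ∑ t, x t * A.σ t c s = x p * A.σ p c s := by
      refine Finset.sum_eq_single p (fun t _ ht => ?_) (by simp)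
      have : x t = 0 := by
        by_contra h
        exact ht ((hx t).1 h)
      simp [this]
    rw [hs]
    have hp := (hx p).2 rfl
    constructor
    · intro h
      exact hA.2.2.1 p c s r (right_ne_zero_of_mul h) h1
    · rintro rfl
      exact mul_ne_zero hp h1

theorem future_support {R : Type} [CommRing R] [IsDomain R] {α : Type}
    (A : WeightedAutomaton R α) (hA : A.Bideterministic) (l : List (α × A.Q)) (p : A.Q)
    (hl : A.IsPath p l) (ht : A.τ (A.pathEnd p l) ≠ 0) (q : A.Q) :
    A.future (l.map Prod.fst) q ≠ 0 ↔ q = p := by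
  induction l generalizing p q with
  | nil =>
    constructor
    · intro h
      exact hA.2.1 q p h ht
    · rintro rfl
      exact ht
  | cons a l ih =>
    obtain ⟨c, r⟩ := a
    obtain ⟨h1, h2⟩ := hl
    have ih' := ih r h2 ht
    have hs : A.future (((c, r) :: l).map Prod.fst) q
        = A.σ q c r * A.future (l.map Prod.fst) r := by
      refine Finset.sum_eq_single r (fun t _ htr => ?_) (by simp)
      have : A.future (l.map Prod.fst) t = 0 := by
        by_contra h
        exact htr ((ih' t).1 h)
      rw [this, mul_zero]
    rw [hs]
    constructor
    · intro h
      exact hA.2.2.2 q p c r (left_ne_zero_of_mul h) h1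
    · rintro rfl
      exact mul_ne_zero h1 ((ih' r).2 rfl)

theorem minimal_of_isDomain {R : Type} [CommRing R] [IsDomain R] {α : Type}
    (A : WeightedAutomaton R α) (hT : A.Trim) (hA : A.Bideterministic) : A.Minimal := by
  intro B hB
  have h1 : ∀ q, ∃ u, ∀ r, A.fwd A.ι u r ≠ 0 ↔ r = q := by
    intro q
    obtain ⟨p, l, hp, hl, rfl⟩ := (hT q).1
    refine ⟨l.map Prod.fst, fwd_support A hA l p _ (fun s => ?_) hl⟩
    constructor
    · intro h
      exact hA.1 s p h hp
    · rintro rfl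
      exact hp
  have h2 : ∀ q, ∃ v, ∀ r, A.future v r ≠ 0 ↔ r = q := by
    intro q
    obtain ⟨l, hl, ht⟩ := (hT q).2
    exact ⟨l.map Prod.fst, future_support A hA l q hl ht⟩
  choose u hu using h1
  choose v hv using h2
  have hM : ∀ p q, A.behaviour (u p ++ v q) ≠ 0 ↔ p = q := by
    intro p q
    have hs : A.behaviour (u p ++ v q) = A.fwd A.ι (u p) p * A.future (v q) p := by
      rw [behaviour_append]
      refine Finset.sum_eq_single p (fun t _ htr => ?_) (by simp)
      have : A.fwd A.ι (u p) t = 0 := by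
        by_contra h
        exact htr ((hu p t).1 h)
      rw [this, zero_mul]
    rw [hs, mul_ne_zero_iff, hu, hv]
    simp
  have hlin : LinearIndependent R (fun p : A.Q => B.fwd B.ι (u p)) := by
    rw [Fintype.linearIndependent_iff]
    intro g hg q
    have key : ∑ p, g p * A.behaviour (u p ++ v q) = 0 := by
      rw [← hB]
      simp only [behaviour_append, Finset.mul_sum]
      rw [Finset.sum_comm]
      refine Finset.sum_eq_zero (fun s _ => ?_)
      have h := congrFun hg s
      simp only [Finset.sum_apply, Pi.smul_apply, smul_eq_mul, Pi.zero_apply] at h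
      simp only [← mul_assoc]
      rw [← Finset.sum_mul, h, zero_mul]
    have hs : ∑ p, g p * A.behaviour (u p ++ v q) = g q * A.behaviour (u q ++ v q) := by
      refine Finset.sum_eq_single q (fun t _ htr => ?_) (by simp)
      have : A.behaviour (u t ++ v q) = 0 := by
        by_contra h
        exact htr ((hM t q).1 h)
      rw [this, mul_zero]
    rw [hs] at key
    exact (mul_eq_zero.1 key).resolve_right ((hM q q).2 rfl)
  have h := hlin.fintype_card_le_finrank
  rw [Module.finrank_fintype_fun_eq_card] at h
  exact h

end WeightedAutomaton

/-- For a commutative ring `R`, every trim bideterministic weighted automaton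
over `R` is minimal if and only if `R` is trivial or an integral domain. -/
theorem trim_bideterministic_minimal_iff_trivial_or_isDomain
    {R : Type} [CommRing R] :
    (∀ (α : Type) (_ : Fintype α) (_ : Nonempty α)
        (A : WeightedAutomaton R α), A.Trim → A.Bideterministic → A.Minimal) ↔
      ((0 : R) = 1 ∨ IsDomain R) := by
  constructor
  · intro H
    by_cases h01 : (0 : R) = 1
    · exact Or.inl h01
    right
    have : Nontrivial R := ⟨⟨0, 1, h01⟩⟩
    have : NoZeroDivisors R := by
      refine ⟨fun {a b} hab => ?_⟩
      by_contra hne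
      rw [not_or] at hne
      obtain ⟨ha, hb⟩ := hne
      let A : WeightedAutomaton R Unit :=
        { Q := Unit, σ := fun _ _ _ => 0, ι := fun _ => a, τ := fun _ => b }
      let B : WeightedAutomaton R Unit :=
        { Q := Empty, σ := fun _ _ _ => 0, ι := fun _ => 0, τ := fun _ => 0 }
      have hmin := H Unit inferInstance inferInstance A
        (fun q => ⟨⟨q, [], ha, trivial, rfl⟩, ⟨[], trivial, hb⟩⟩)
        ⟨fun _ _ _ _ => rfl, fun _ _ _ _ => rfl, fun _ _ _ _ _ _ => rfl,
          fun _ _ _ _ _ _ => rfl⟩ B (by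
            funext w
            have hBw : B.behaviour w = 0 := Fintype.sum_empty (ι := Empty) _
            have hAw : A.behaviour w = 0 := by
              refine Finset.sum_eq_zero (fun q _ => ?_)
              cases w with
              | nil => exact hab
              | cons c w => simp [WeightedAutomaton.future, A]
            rw [hBw, hAw])
      have hA1 : A.states = 1 := Fintype.card_unit
      have hB0 : B.states = 0 := Fintype.card_empty
      omega
    exact NoZeroDivisors.to_isDomain R
  · rintro (h01 | hdom) α _ _ A hT hA
    · intro B _
      have hsub : Subsingleton R := subsingleton_of_zero_eq_one h01
      have : IsEmpty A.Q := ⟨fun q => by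
        obtain ⟨p, l, hp, _⟩ := (hT q).1
        exact hp (Subsingleton.elim _ _)⟩
      have h0 : A.states = 0 := Fintype.card_eq_zero
      omega
    · exact WeightedAutomaton.minimal_of_isDomain A hT hA
end

section
/- Let m be a positive integer with at least two distinct prime factors. Then there is a trim bideterministic weighted automaton A over the ring ℤ/mℤ of integers modulo m and a two-letter alphabet such that no minimal weighted automaton over ℤ/mℤ whose behaviour equals ‖A‖ is bideterministic. -/
namespace WeightedAutomaton

section aux
variable {S : Type} [CommRing S]

/-- Five-state trim bideterministic automaton: `aba ↦ e^3`, `bb ↦ f^2` (`a = true`). -/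
def autA (e f : S) : WeightedAutomaton S Bool where
  Q := Fin 5
  σ := fun p c q =>
    match c with
    | true => if (p = 0 ∧ q = 1) ∨ (p = 2 ∧ q = 3) then e else 0
    | false => if p = 1 ∧ q = 2 then e else
        if (p = 0 ∧ q = 4) ∨ (p = 4 ∧ q = 3) then f else 0
  ι := fun q => if q = 0 then 1 else 0
  τ := fun q => if q = 3 then 1 else 0

/-- Four-state automaton with the same behaviour if `e * f = 0`. -/
def autB (e f : S) : WeightedAutomaton S Bool where
  Q := Fin 4
  σ := fun p c q =>
    match c with
    | true => if (p = 0 ∧ q = 1) ∨ (p = 2 ∧ q = 3) then e else 0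
    | false => if p = 1 ∧ q = 2 then e else
        if (p = 0 ∧ q = 1) ∨ (p = 1 ∧ q = 3) then f else 0
  ι := fun q => if q = 0 then 1 else 0
  τ := fun q => if q = 3 then 1 else 0

/-- The common behaviour. -/
def ser (e f : S) : List Bool → S
  | [true, false, true] => e ^ 3
  | [false, false] => f ^ 2
  | _ => 0

section A
variable (e f : S)

lemma A3 (w : List Bool) : (autA e f).future w (3 : Fin 5) = if w = [] then 1 else 0 := by
  cases w with
  | nil => simp [future, autA]
  | cons c w => cases c <;> simp [future, autA]

lemma A2 (w : List Bool) : (autA e f).future w (2 : Fin 5) = if w = [true] then e else 0 := by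
  cases w with
  | nil => simp [future, autA]
  | cons c w =>
    have h := A3 e f w
    cases c
    · simp [future, autA]
    · change (∑ p : Fin 5, (autA e f).σ (2 : Fin 5) true p * (autA e f).future w p) = _
      rw [Fin.sum_univ_five, h]
      simp [autA]

lemma A1 (w : List Bool) : (autA e f).future w (1 : Fin 5)
    = if w = [false, true] then e ^ 2 else 0 := by
  cases w with
  | nil => simp [future, autA]
  | cons c w =>
    have h := A2 e f w
    cases c
    · change (∑ p : Fin 5, (autA e f).σ (1 : Fin 5) false p * (autA e f).future w p) = _
      rw [Fin.sum_univ_five, h]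
      simp [autA, pow_two]
    · simp [future, autA]

lemma A4 (w : List Bool) : (autA e f).future w (4 : Fin 5) = if w = [false] then f else 0 := by
  cases w with
  | nil => simp [future, autA]
  | cons c w =>
    have h := A3 e f w
    cases c
    · change (∑ p : Fin 5, (autA e f).σ (4 : Fin 5) false p * (autA e f).future w p) = _
      rw [Fin.sum_univ_five, h]
      simp [autA]
    · simp [future, autA]

lemma A0 (w : List Bool) : (autA e f).future w (0 : Fin 5)
    = if w = [true, false, true] then e ^ 3 else if w = [false, false] then f ^ 2 else 0 := by
  cases w with
  | nil => simp [future, autA]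
  | cons c w =>
    have h := A1 e f w
    have h' := A4 e f w
    cases c
    · change (∑ p : Fin 5, (autA e f).σ (0 : Fin 5) false p * (autA e f).future w p) = _
      rw [Fin.sum_univ_five, h']
      simp [autA, pow_two]
    · change (∑ p : Fin 5, (autA e f).σ (0 : Fin 5) true p * (autA e f).future w p) = _
      rw [Fin.sum_univ_five, h]
      simp [autA, pow_succ, mul_assoc]

lemma A_beh (w : List Bool) : (autA e f).behaviour w
    = if w = [true, false, true] then e ^ 3 else if w = [false, false] then f ^ 2 else 0 := by
  rw [← A0 e f w]
  change (∑ p : Fin 5, (autA e f).ι p * (autA e f).future w p) = _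
  rw [Fin.sum_univ_five]
  simp [autA]

lemma B3 (w : List Bool) : (autB e f).future w (3 : Fin 4) = if w = [] then 1 else 0 := by
  cases w with
  | nil => simp [future, autB]
  | cons c w => cases c <;> simp [future, autB]

lemma B2 (w : List Bool) : (autB e f).future w (2 : Fin 4) = if w = [true] then e else 0 := by
  cases w with
  | nil => simp [future, autB]
  | cons c w =>
    have h := B3 e f w
    cases c
    · simp [future, autB]
    · change (∑ p : Fin 4, (autB e f).σ (2 : Fin 4) true p * (autB e f).future w p) = _
      rw [Fin.sum_univ_four, h]
      simp [autB]

lemma B1 (w : List Bool) : (autB e f).future w (1 : Fin 4)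
    = (if w = [false, true] then e ^ 2 else 0) + if w = [false] then f else 0 := by
  cases w with
  | nil => simp [future, autB]
  | cons c w =>
    have h := B2 e f w
    have h' := B3 e f w
    cases c
    · change (∑ p : Fin 4, (autB e f).σ (1 : Fin 4) false p * (autB e f).future w p) = _
      rw [Fin.sum_univ_four, h, h']
      simp [autB, pow_two]
    · simp [future, autB]

lemma B0 (hef : e * f = 0) (w : List Bool) : (autB e f).future w (0 : Fin 4)
    = if w = [true, false, true] then e ^ 3 else if w = [false, false] then f ^ 2 else 0 := by
  have h2 : f * e ^ 2 = 0 := by linear_combination e * hef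
  cases w with
  | nil => simp [future, autB]
  | cons c w =>
    have h := B1 e f w
    cases c
    · change (∑ p : Fin 4, (autB e f).σ (0 : Fin 4) false p * (autB e f).future w p) = _
      rw [Fin.sum_univ_four, h]
      simp [autB, mul_add, h2, pow_two f]
    · change (∑ p : Fin 4, (autB e f).σ (0 : Fin 4) true p * (autB e f).future w p) = _
      rw [Fin.sum_univ_four, h]
      simp [autB, mul_add, hef, pow_succ, mul_assoc]

lemma B_beh (hef : e * f = 0) : (autB e f).behaviour = (autA e f).behaviour := by
  funext w
  rw [A_beh, ← B0 e f hef w]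
  change (∑ p : Fin 4, (autB e f).ι p * (autB e f).future w p) = _
  rw [Fin.sum_univ_four]
  simp [autB]

lemma A_trim (h1 : (1 : S) ≠ 0) (he : e ≠ 0) (hf : f ≠ 0) : (autA e f).Trim := by
  have acc : ∀ (q : Fin 5) (l : List (Bool × Fin 5)), (autA e f).IsPath (0 : Fin 5) l →
      (autA e f).pathEnd (0 : Fin 5) l = q → (autA e f).Accessible q := by
    intro q l h h'
    exact ⟨(0 : Fin 5), l, by simpa [autA] using h1, h, h'⟩
  have coacc : ∀ (q : Fin 5) (l : List (Bool × Fin 5)), (autA e f).IsPath q l →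
      (autA e f).pathEnd q l = (3 : Fin 5) → (autA e f).Coaccessible q := by
    intro q l h h'
    refine ⟨l, h, ?_⟩
    rw [h']
    simpa [autA] using h1
  intro (q : Fin 5)
  have hA : ∀ (p : Fin 5) c (q : Fin 5) (l : List (Bool × Fin 5)), (autA e f).σ p c q ≠ 0 →
    (autA e f).IsPath q l → (autA e f).IsPath p ((c, q) :: l) := fun p c q l h h' => ⟨h, h'⟩
  have hN : ∀ (p : Fin 5), (autA e f).IsPath p [] := fun p => trivial
  have e1 : (autA e f).σ (0 : Fin 5) true (1 : Fin 5) ≠ 0 := by simpa [autA] using he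
  have e2 : (autA e f).σ (1 : Fin 5) false (2 : Fin 5) ≠ 0 := by simpa [autA] using he
  have e3 : (autA e f).σ (2 : Fin 5) true (3 : Fin 5) ≠ 0 := by simpa [autA] using he
  have e4 : (autA e f).σ (0 : Fin 5) false (4 : Fin 5) ≠ 0 := by simpa [autA] using hf
  have e5 : (autA e f).σ (4 : Fin 5) false (3 : Fin 5) ≠ 0 := by simpa [autA] using hf
  fin_cases q
  · exact ⟨acc 0 [] trivial rfl,
      coacc 0 [(false, 4), (false, 3)] ⟨e4, e5, trivial⟩ rfl⟩
  · exact ⟨acc 1 [(true, 1)] ⟨e1, trivial⟩ rfl,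
      coacc 1 [(false, 2), (true, 3)] ⟨e2, e3, trivial⟩ rfl⟩
  · exact ⟨acc 2 [(true, 1), (false, 2)] ⟨e1, e2, trivial⟩ rfl,
      coacc 2 [(true, 3)] ⟨e3, trivial⟩ rfl⟩
  · exact ⟨acc 3 [(false, 4), (false, 3)] ⟨e4, e5, trivial⟩ rfl,
      coacc 3 [] trivial rfl⟩
  · exact ⟨acc 4 [(false, 4)] ⟨e4, trivial⟩ rfl,
      coacc 4 [(false, 3)] ⟨e5, trivial⟩ rfl⟩

lemma A_bidet : (autA e f).Bideterministic := by
  refine ⟨?_, ?_, ?_, ?_⟩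
  · intro (p : Fin 5) (q : Fin 5) h h'
    simp only [autA, ne_eq, ite_eq_right_iff, not_forall] at h h'
    obtain ⟨h, -⟩ := h
    obtain ⟨h', -⟩ := h'
    exact h.trans h'.symm
  · intro (p : Fin 5) (q : Fin 5) h h'
    simp only [autA, ne_eq, ite_eq_right_iff, not_forall] at h h'
    obtain ⟨h, -⟩ := h
    obtain ⟨h', -⟩ := h'
    exact h.trans h'.symm
  · intro (p : Fin 5) c (q : Fin 5) (q' : Fin 5) h h'
    cases c <;> simp only [autA] at h h' <;> grind
  · intro (p : Fin 5) (p' : Fin 5) c (q : Fin 5) h h'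
    cases c <;> simp only [autA] at h h' <;> grind

end A

variable {B : WeightedAutomaton S Bool}

lemma step (hB : B.Bideterministic) {q p : B.Q} {c : Bool} (h : B.σ q c p ≠ 0) (w : List Bool) :
    B.future (c :: w) q = B.σ q c p * B.future w p := by
  rw [future]
  refine Finset.sum_eq_single p (fun b _ hb => ?_) (by simp)
  by_cases hz : B.σ q c b = 0
  · simp [hz]
  · exact absurd (hB.2.2.1 _ _ _ _ hz h) hb

lemma start (hB : B.Bideterministic) {q : B.Q} (h : B.ι q ≠ 0) (w : List Bool) :
    B.behaviour w = B.ι q * B.future w q := by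
  rw [behaviour]
  refine Finset.sum_eq_single q (fun b _ hb => ?_) (by simp)
  by_cases hz : B.ι b = 0
  · simp [hz]
  · exact absurd (hB.1 _ _ hz h) hb

lemma ex_step {q : B.Q} {c : Bool} {w : List Bool} (h : B.future (c :: w) q ≠ 0) :
    ∃ p, B.σ q c p ≠ 0 ∧ B.future w p ≠ 0 := by
  rw [future] at h
  obtain ⟨p, -, hp⟩ := Finset.exists_ne_zero_of_sum_ne_zero h
  exact ⟨p, left_ne_zero_of_mul hp, right_ne_zero_of_mul hp⟩

lemma ex_start {w : List Bool} (h : B.behaviour w ≠ 0) :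
    ∃ p, B.ι p ≠ 0 ∧ B.future w p ≠ 0 := by
  rw [behaviour] at h
  obtain ⟨p, -, hp⟩ := Finset.exists_ne_zero_of_sum_ne_zero h
  exact ⟨p, left_ne_zero_of_mul hp, right_ne_zero_of_mul hp⟩

lemma key (e f : S) (he : e ^ 3 ≠ 0) (hf : f ^ 2 ≠ 0)
    (hbeh : B.behaviour = (autA e f).behaviour) (hB : B.Bideterministic)
    (hcard : B.states ≤ 4) : False := by
  have hx : B.behaviour [true, false, true] ≠ 0 := by rw [hbeh, A_beh]; simpa using he
  have hy : B.behaviour [false, false] ≠ 0 := by rw [hbeh, A_beh]; simpa using hf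
  have z0 : B.behaviour [] = 0 := by rw [hbeh, A_beh]; simp
  have z1 : B.behaviour [true] = 0 := by rw [hbeh, A_beh]; simp
  have z2 : B.behaviour [false, true] = 0 := by rw [hbeh, A_beh]; simp
  have z3 : B.behaviour [true, true] = 0 := by rw [hbeh, A_beh]; simp
  have z4 : B.behaviour [true, false] = 0 := by rw [hbeh, A_beh]; simp
  obtain ⟨s0, i0, h0⟩ := ex_start hx
  obtain ⟨s1, a1, h1⟩ := ex_step h0
  obtain ⟨s2, a2, h2⟩ := ex_step h1
  obtain ⟨s3, a3, h3⟩ := ex_step h2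
  obtain ⟨t0, j0, k0⟩ := ex_start hy
  obtain ⟨t1, b1, k1⟩ := ex_step k0
  obtain ⟨t2, b2, k2⟩ := ex_step k1
  have ht0 : t0 = s0 := hB.1 _ _ j0 i0
  have ht2 : t2 = s3 := hB.2.1 _ _ k2 h3
  subst ht0 ht2
  rw [start hB i0] at hx z0 z1 z2 z3 z4
  rw [step hB a1, step hB a2, step hB a3, future] at hx
  have n01 : t0 ≠ s1 := by
    intro h
    rw [step hB (h ▸ a2), step hB a3, future] at z2
    apply hx; rw [← h]; linear_combination (B.σ t0 true t0) * z2
  have n03 : t0 ≠ t2 := by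
    intro h
    rw [future, h] at z0
    apply hx; rw [h]; linear_combination (B.σ t2 true s1 * B.σ s1 false s2 * B.σ s2 true t2) * z0
  have n13 : s1 ≠ t2 := by
    intro h
    rw [step hB a1, future, h] at z1
    apply hx; rw [h]; linear_combination (B.σ t2 false s2 * B.σ s2 true t2) * z1
  have n02 : t0 ≠ s2 := by
    intro h
    exact n13 (hB.2.2.1 _ _ _ _ a1 (h ▸ a3))
  have n12 : s1 ≠ s2 := by
    intro h
    rw [step hB a1, step hB (h ▸ a3), future] at z3
    apply hx; rw [← h]; linear_combination (B.σ s1 false s1) * z3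
  have n23 : s2 ≠ t2 := by
    intro h
    rw [step hB a1, step hB a2, future, h] at z4
    apply hx; rw [h]; linear_combination (B.σ t2 true t2) * z4
  classical
  have huniv : ({t0, s1, s2, t2} : Finset B.Q) = Finset.univ := by
    apply Finset.eq_univ_of_card
    have h4 : ({t0, s1, s2, t2} : Finset B.Q).card = 4 := by
      rw [Finset.card_insert_of_notMem (by simp [n01, n02, n03]),
        Finset.card_insert_of_notMem (by simp [n12, n13]), Finset.card_pair n23]
    apply le_antisymm (Finset.card_le_univ _)
    rw [h4]; exact hcard
  have hmem : t1 ∈ ({t0, s1, s2, t2} : Finset B.Q) := by rw [huniv]; simp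
  simp only [Finset.mem_insert, Finset.mem_singleton] at hmem
  rcases hmem with rfl | rfl | rfl | rfl
  · exact n03 (hB.2.2.1 _ _ _ _ b1 b2)
  · exact n23 (hB.2.2.1 _ _ _ _ a2 b2)
  · exact n01 (hB.2.2.2 _ _ _ _ b1 a2)
  · exact n03 (hB.2.2.2 _ _ _ _ b1 b2)

end aux

lemma exists_ef (m : ℕ) (hm : 0 < m)
    (hpq : ∃ p q : ℕ, p.Prime ∧ q.Prime ∧ p ≠ q ∧ p ∣ m ∧ q ∣ m) :
    ∃ e f : ZMod m, e * f = 0 ∧ e ^ 3 ≠ 0 ∧ f ^ 2 ≠ 0 := by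
  obtain ⟨p, q, hp, hq, hne, hpm, hqm⟩ := hpq
  obtain ⟨k, t, ht, rfl⟩ := Nat.exists_eq_pow_mul_and_not_dvd hm.ne' p hp.ne_one
  refine ⟨((p ^ k : ℕ) : ZMod _), ((t : ℕ) : ZMod _), ?_, ?_, ?_⟩
  · rw [← Nat.cast_mul]; exact ZMod.natCast_self _
  · rw [← Nat.cast_pow, Ne, ZMod.natCast_eq_zero_iff]
    intro h
    have := hq.dvd_of_dvd_pow (hq.dvd_of_dvd_pow (hqm.trans h))
    exact hne ((Nat.prime_dvd_prime_iff_eq hq hp).1 this).symm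
  · rw [← Nat.cast_pow, Ne, ZMod.natCast_eq_zero_iff]
    intro h
    exact ht (hp.dvd_of_dvd_pow (hpm.trans h))

end WeightedAutomaton




/-- If `m` is a positive integer with at least two distinct prime factors,
then there is a trim bideterministic weighted automaton over `ZMod m` and a
two-letter alphabet none of whose equivalent minimal automata is
bideterministic. -/
theorem exists_trim_bideterministic_no_minimal_bideterministic_zmod
    (m : ℕ) (hm : 0 < m)
    (hpq : ∃ p q : ℕ, p.Prime ∧ q.Prime ∧ p ≠ q ∧ p ∣ m ∧ q ∣ m) :
    ∃ A : WeightedAutomaton (ZMod m) Bool, A.Trim ∧ A.Bideterministic ∧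
      ∀ B : WeightedAutomaton (ZMod m) Bool,
        B.behaviour = A.behaviour → B.Minimal → ¬ B.Bideterministic := by
  obtain ⟨e, f, hef, he, hf⟩ := WeightedAutomaton.exists_ef m hm hpq
  refine ⟨WeightedAutomaton.autA e f, ?_, WeightedAutomaton.A_bidet e f, ?_⟩
  · refine WeightedAutomaton.A_trim e f ?_ ?_ ?_
    · intro h
      exact he (by rw [← mul_one (e ^ 3), h, mul_zero])
    · rintro rfl
      simp at he
    · rintro rfl
      simp at hf
  · intro B hB hmin hbi
    have hle := hmin (WeightedAutomaton.autB e f)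
      ((WeightedAutomaton.B_beh e f hef).trans hB.symm)
    have h4 : (WeightedAutomaton.autB e f).states = 4 := Fintype.card_fin 4
    exact WeightedAutomaton.key e f he hf hB hbi (h4 ▸ hle)
end

section
/- Let S be a commutative semiring with elements u, v ∈ S such that u·v ≠ 0 and u² = 0 = v². Then there is a trim bideterministic weighted automaton A over S and a two-letter alphabet such that no minimal weighted automaton over S whose behaviour equals ‖A‖ is bideterministic. -/
namespace WeightedAutomaton

/-- Transition weights: letter `a` is `true`, letter `b` is `false`. -/
def bigσ {S : Type} [CommSemiring S] (u v : S) (p : Fin 6) (c : Bool) (q : Fin 6) : S :=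
  if p = 0 ∧ c = true ∧ q = 2 then u
  else if p = 0 ∧ c = false ∧ q = 1 then 1
  else if p = 1 ∧ c = true ∧ q = 5 then v
  else if p = 1 ∧ c = false ∧ q = 4 then 1
  else if p = 2 ∧ c = true ∧ q = 3 then v
  else if p = 5 ∧ c = false ∧ q = 3 then u
  else if p = 3 ∧ c = true ∧ q = 4 then 1
  else 0

/-- The six-state trim bideterministic automaton. -/
def bigAut {S : Type} [CommSemiring S] (u v : S) : WeightedAutomaton S Bool where
  Q := Fin 6
  σ := bigσ u v
  ι := fun q => if q = 0 then 1 else 0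
  τ := fun q => if q = 4 then 1 else 0

/-- Transition weights of the merged automaton. -/
def smallσ {S : Type} [CommSemiring S] (u v : S) (p : Fin 5) (c : Bool) (q : Fin 5) : S :=
  if p = 0 ∧ c = true ∧ q = 2 then u
  else if p = 0 ∧ c = false ∧ q = 1 then 1
  else if p = 1 ∧ c = true ∧ q = 2 then v
  else if p = 1 ∧ c = false ∧ q = 4 then 1
  else if p = 2 ∧ c = true ∧ q = 3 then v
  else if p = 2 ∧ c = false ∧ q = 3 then u
  else if p = 3 ∧ c = true ∧ q = 4 then 1
  else 0

/-- The five-state automaton with the two middle states merged. -/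
def smallAut {S : Type} [CommSemiring S] (u v : S) : WeightedAutomaton S Bool where
  Q := Fin 5
  σ := smallσ u v
  ι := fun q => if q = 0 then 1 else 0
  τ := fun q => if q = 4 then 1 else 0

/-- The common behaviour. -/
def theSeries {S : Type} [CommSemiring S] (u v : S) (w : List Bool) : S :=
  if w = [true, true, true] then u * v
  else if w = [false, true, false, true] then u * v
  else if w = [false, false] then 1 else 0

section
variable {S : Type} [CommSemiring S] (u v : S)

/-- Futures of the big automaton, on a plain type. -/
def bigF (w : List Bool) (q : Fin 6) : S := (bigAut u v).future w q

/-- Futures of the small automaton, on a plain type. -/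
def smallF (w : List Bool) (q : Fin 5) : S := (smallAut u v).future w q

lemma bigF_nil (q : Fin 6) : bigF u v [] q = if q = 4 then 1 else 0 := rfl
lemma bigF_cons (c : Bool) (w : List Bool) (q : Fin 6) :
    bigF u v (c :: w) q = ∑ p : Fin 6, bigσ u v q c p * bigF u v w p := rfl
lemma smallF_nil (q : Fin 5) : smallF u v [] q = if q = 4 then 1 else 0 := rfl
lemma smallF_cons (c : Bool) (w : List Bool) (q : Fin 5) :
    smallF u v (c :: w) q = ∑ p : Fin 5, smallσ u v q c p * smallF u v w p := rfl

lemma bigF4 (w) : bigF u v w 4 = if w = [] then 1 else 0 := by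
  cases w with
  | nil => simp [bigF_nil]
  | cons c w => simp [bigF_cons, bigσ]

lemma bigF3 (w) : bigF u v w 3 = if w = [true] then 1 else 0 := by
  cases w with
  | nil => simp [bigF_nil]
  | cons c w => cases c <;> simp [bigF_cons, bigσ, bigF4, Fin.sum_univ_six]

lemma bigF2 (w) : bigF u v w 2 = if w = [true, true] then v else 0 := by
  cases w with
  | nil => simp [bigF_nil]
  | cons c w => cases c <;> simp [bigF_cons, bigσ, bigF3, Fin.sum_univ_six]

lemma bigF5 (w) : bigF u v w 5 = if w = [false, true] then u else 0 := by
  cases w with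
  | nil => simp [bigF_nil]
  | cons c w => cases c <;> simp [bigF_cons, bigσ, bigF3, Fin.sum_univ_six]

lemma bigF1 (w) : bigF u v w 1 =
    if w = [true, false, true] then v * u else if w = [false] then 1 else 0 := by
  cases w with
  | nil => simp [bigF_nil]
  | cons c w => cases c <;> simp [bigF_cons, bigσ, bigF4, bigF5, Fin.sum_univ_six]

lemma bigF0 (w) : bigF u v w 0 = theSeries u v w := by
  cases w with
  | nil => simp [bigF_nil, theSeries]
  | cons c w =>
    cases c <;> simp [bigF_cons, bigσ, bigF1, bigF2, Fin.sum_univ_six, theSeries, mul_comm u v]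

lemma smallF4 (w) : smallF u v w 4 = if w = [] then 1 else 0 := by
  cases w with
  | nil => simp [smallF_nil]
  | cons c w => simp [smallF_cons, smallσ]

lemma smallF3 (w) : smallF u v w 3 = if w = [true] then 1 else 0 := by
  cases w with
  | nil => simp [smallF_nil]
  | cons c w => cases c <;> simp [smallF_cons, smallσ, smallF4, Fin.sum_univ_five]

lemma smallF2 (w) : smallF u v w 2 =
    if w = [true, true] then v else if w = [false, true] then u else 0 := by
  cases w with
  | nil => simp [smallF_nil]
  | cons c w => cases c <;> simp [smallF_cons, smallσ, smallF3, Fin.sum_univ_five]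

lemma smallF1 (hv : v * v = 0) (w) : smallF u v w 1 =
    if w = [true, false, true] then v * u else if w = [false] then 1 else 0 := by
  cases w with
  | nil => simp [smallF_nil]
  | cons c w =>
    cases c <;> simp [smallF_cons, smallσ, smallF4, smallF2, Fin.sum_univ_five]
    split_ifs <;> simp_all

lemma smallF0 (hu : u * u = 0) (hv : v * v = 0) (w) : smallF u v w 0 = theSeries u v w := by
  cases w with
  | nil => simp [smallF_nil, theSeries]
  | cons c w =>
    cases c <;> simp [smallF_cons, smallσ, smallF1 u v hv, smallF2, Fin.sum_univ_five, theSeries,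
      mul_comm u v]
    split_ifs <;> simp_all [mul_comm u v]

lemma big_behaviour : (bigAut u v).behaviour = theSeries u v := by
  funext w
  have : (bigAut u v).behaviour w = ∑ q : Fin 6, (if q = 0 then 1 else 0) * bigF u v w q := rfl
  rw [this]; simp [bigF0]

lemma small_behaviour (hu : u * u = 0) (hv : v * v = 0) :
    (smallAut u v).behaviour = theSeries u v := by
  funext w
  have : (smallAut u v).behaviour w = ∑ q : Fin 5, (if q = 0 then 1 else 0) * smallF u v w q := rfl
  rw [this]; simp [smallF0 u v hu hv]

end

section
variable {S : Type} [CommSemiring S] {u v : S}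

lemma big_trim (hu : u ≠ 0) (hv : v ≠ 0) (h1 : (1 : S) ≠ 0) : (bigAut u v).Trim := by
  have hι : (bigAut u v).ι (0 : Fin 6) ≠ 0 := by simpa [bigAut] using h1
  have hτ : (bigAut u v).τ (4 : Fin 6) ≠ 0 := by simpa [bigAut] using h1
  have e02 : (bigAut u v).σ (0 : Fin 6) true (2 : Fin 6) ≠ 0 := by simpa [bigAut, bigσ] using hu
  have e01 : (bigAut u v).σ (0 : Fin 6) false (1 : Fin 6) ≠ 0 := by simpa [bigAut, bigσ] using h1
  have e15 : (bigAut u v).σ (1 : Fin 6) true (5 : Fin 6) ≠ 0 := by simpa [bigAut, bigσ] using hv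
  have e14 : (bigAut u v).σ (1 : Fin 6) false (4 : Fin 6) ≠ 0 := by simpa [bigAut, bigσ] using h1
  have e23 : (bigAut u v).σ (2 : Fin 6) true (3 : Fin 6) ≠ 0 := by simpa [bigAut, bigσ] using hv
  have e53 : (bigAut u v).σ (5 : Fin 6) false (3 : Fin 6) ≠ 0 := by simpa [bigAut, bigσ] using hu
  have e34 : (bigAut u v).σ (3 : Fin 6) true (4 : Fin 6) ≠ 0 := by simpa [bigAut, bigσ] using h1
  intro q
  change Fin 6 at q
  fin_cases q
  · exact ⟨⟨(0 : Fin 6), [], hι, trivial, rfl⟩,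
      ⟨[(false, (1 : Fin 6)), (false, (4 : Fin 6))], ⟨e01, e14, trivial⟩, hτ⟩⟩
  · exact ⟨⟨(0 : Fin 6), [(false, (1 : Fin 6))], hι, ⟨e01, trivial⟩, rfl⟩,
      ⟨[(false, (4 : Fin 6))], ⟨e14, trivial⟩, hτ⟩⟩
  · exact ⟨⟨(0 : Fin 6), [(true, (2 : Fin 6))], hι, ⟨e02, trivial⟩, rfl⟩,
      ⟨[(true, (3 : Fin 6)), (true, (4 : Fin 6))], ⟨e23, e34, trivial⟩, hτ⟩⟩
  · exact ⟨⟨(0 : Fin 6), [(true, (2 : Fin 6)), (true, (3 : Fin 6))], hι, ⟨e02, e23, trivial⟩, rfl⟩,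
      ⟨[(true, (4 : Fin 6))], ⟨e34, trivial⟩, hτ⟩⟩
  · exact ⟨⟨(0 : Fin 6), [(false, (1 : Fin 6)), (false, (4 : Fin 6))], hι,
      ⟨e01, e14, trivial⟩, rfl⟩, ⟨[], trivial, hτ⟩⟩
  · exact ⟨⟨(0 : Fin 6), [(false, (1 : Fin 6)), (true, (5 : Fin 6))], hι,
      ⟨e01, e15, trivial⟩, rfl⟩,
      ⟨[(false, (3 : Fin 6)), (true, (4 : Fin 6))], ⟨e53, e34, trivial⟩, hτ⟩⟩

lemma bigσ_ne {p : Fin 6} {c : Bool} {q : Fin 6} (h : bigσ u v p c q ≠ 0) :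
    (p = 0 ∧ c = true ∧ q = 2) ∨ (p = 0 ∧ c = false ∧ q = 1) ∨ (p = 1 ∧ c = true ∧ q = 5) ∨
    (p = 1 ∧ c = false ∧ q = 4) ∨ (p = 2 ∧ c = true ∧ q = 3) ∨ (p = 5 ∧ c = false ∧ q = 3) ∨
    (p = 3 ∧ c = true ∧ q = 4) := by
  by_contra hn
  simp only [not_or] at hn
  apply h
  simp only [bigσ, hn, if_false]

lemma big_bidet : (bigAut u v).Bideterministic := by
  refine ⟨?_, ?_, ?_, ?_⟩
  · intro (p : Fin 6) (q : Fin 6) hp hq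
    simp only [bigAut, ne_eq, ite_eq_right_iff, Classical.not_imp] at hp hq
    exact hp.1.trans hq.1.symm
  · intro (p : Fin 6) (q : Fin 6) hp hq
    simp only [bigAut, ne_eq, ite_eq_right_iff, Classical.not_imp] at hp hq
    exact hp.1.trans hq.1.symm
  · intro (p : Fin 6) c (q : Fin 6) (q' : Fin 6) hp hq
    have h1 := bigσ_ne hp
    have h2 := bigσ_ne hq
    change @Eq (Fin 6) q q'
    clear hp hq
    cases c <;> simp at h1 h2 <;> omega
  · intro (p : Fin 6) (p' : Fin 6) c (q : Fin 6) hp hq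
    have h1 := bigσ_ne hp
    have h2 := bigσ_ne hq
    change @Eq (Fin 6) p p'
    clear hp hq
    cases c <;> simp at h1 h2 <;> omega

variable {α : Type} {B : WeightedAutomaton S α}

lemma bidet_start (hB : B.Bideterministic) {w : List α} (h : B.behaviour w ≠ 0) :
    ∃ q, ∀ z, B.behaviour z = B.ι q * B.future z q := by
  obtain ⟨q, -, hq⟩ := Finset.exists_ne_zero_of_sum_ne_zero h
  have hq' : B.ι q ≠ 0 := left_ne_zero_of_mul hq
  refine ⟨q, fun z => ?_⟩
  refine Finset.sum_eq_single q (fun p _ hp => ?_) (by simp)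
  by_cases h0 : B.ι p = 0
  · simp [h0]
  · exact absurd (hB.1 p q h0 hq') hp

/-- One deterministic step, tracking the residual of the series. -/
lemma bidet_step (hB : B.Bideterministic) {g : List α → S} {q : B.Q} {W : S}
    (hg : ∀ z, g z = W * B.future z q) {c : α} {w : List α} (h : g (c :: w) ≠ 0) :
    ∃ p W', B.σ q c p ≠ 0 ∧ ∀ z, g (c :: z) = W' * B.future z p := by
  rw [hg] at h
  obtain ⟨p, -, hp⟩ := Finset.exists_ne_zero_of_sum_ne_zero (right_ne_zero_of_mul h)
  have hp' : B.σ q c p ≠ 0 := left_ne_zero_of_mul hp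
  refine ⟨p, W * B.σ q c p, hp', fun z => ?_⟩
  rw [hg, mul_assoc]
  congr 1
  refine Finset.sum_eq_single p (fun r _ hr => ?_) (by simp)
  by_cases h0 : B.σ q c r = 0
  · simp [h0]
  · exact absurd (hB.2.2.1 q c r p h0 hp') hr

lemma residual_ne {g k : List α → S} {p q : B.Q} {W V : S}
    (hg : ∀ z, g z = W * B.future z p) (hk : ∀ z, k z = V * B.future z q)
    (z z' : List α) (h : g z * k z' ≠ 0) (h' : k z = 0) : p ≠ q := by
  rintro rfl
  apply h
  have : g z * k z' = g z' * k z := by simp only [hg, hk]; ring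
  rw [this, h', mul_zero]

lemma bidet_card {B : WeightedAutomaton S Bool} (hB : B.Bideterministic)
    (hb : B.behaviour = theSeries u v) (huv : u * v ≠ 0) (h1 : (1 : S) ≠ 0) : 6 ≤ B.states := by
  obtain ⟨q0, h0⟩ := bidet_start hB (w := [false, false]) (by simpa [hb, theSeries] using h1)
  rw [hb] at h0
  obtain ⟨q1, _, e1, h1'⟩ := bidet_step hB h0 (c := false) (w := [false])
    (by simpa [theSeries] using h1)
  obtain ⟨q2, _, e2, h2⟩ := bidet_step hB h1' (c := false) (w := [])
    (by simpa [theSeries] using h1)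
  obtain ⟨p1, _, f1, k1⟩ := bidet_step hB h0 (c := true) (w := [true, true])
    (by simpa [theSeries] using huv)
  obtain ⟨p2, _, f2, k2⟩ := bidet_step hB k1 (c := true) (w := [true])
    (by simpa [theSeries] using huv)
  obtain ⟨r, _, f3, k3⟩ := bidet_step hB h1' (c := true) (w := [false, true])
    (by simpa [theSeries] using huv)
  have n01 : q0 ≠ q1 := residual_ne h0 h1' [false, false] [false]
    (by simpa [theSeries] using h1) (by simp [theSeries])
  have n02 : q0 ≠ q2 := residual_ne h0 h2 [false, false] []
    (by simpa [theSeries] using h1) (by simp [theSeries])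
  have n0p1 : q0 ≠ p1 := residual_ne h0 k1 [false, false] [true, true]
    (by simpa [theSeries] using huv) (by simp [theSeries])
  have n0p2 : q0 ≠ p2 := residual_ne h0 k2 [false, false] [true]
    (by simpa [theSeries] using huv) (by simp [theSeries])
  have n0r : q0 ≠ r := residual_ne h0 k3 [false, false] [false, true]
    (by simpa [theSeries] using huv) (by simp [theSeries])
  have n12 : q1 ≠ q2 := residual_ne h1' h2 [false] []
    (by simpa [theSeries] using h1) (by simp [theSeries])
  have n1p1 : q1 ≠ p1 := residual_ne h1' k1 [false] [true, true]
    (by simpa [theSeries] using huv) (by simp [theSeries])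
  have n1p2 : q1 ≠ p2 := residual_ne h1' k2 [false] [true]
    (by simpa [theSeries] using huv) (by simp [theSeries])
  have n1r : q1 ≠ r := residual_ne h1' k3 [false] [false, true]
    (by simpa [theSeries] using huv) (by simp [theSeries])
  have n2p1 : q2 ≠ p1 := residual_ne h2 k1 [] [true, true]
    (by simpa [theSeries] using huv) (by simp [theSeries])
  have n2p2 : q2 ≠ p2 := residual_ne h2 k2 [] [true]
    (by simpa [theSeries] using huv) (by simp [theSeries])
  have n2r : q2 ≠ r := residual_ne h2 k3 [] [false, true]
    (by simpa [theSeries] using huv) (by simp [theSeries])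
  have np1r : p1 ≠ r := by
    rintro rfl
    exact n01 (hB.2.2.2 _ _ _ _ f1 f3)
  have np1p2 : p1 ≠ p2 := by
    rintro rfl
    exact n0p1 (hB.2.2.2 _ _ _ _ f1 f2)
  have np2r : p2 ≠ r := by
    rintro rfl
    exact n1p1 (hB.2.2.2 _ _ _ _ f3 f2)
  classical
  have hc : ({q0, q1, q2, p1, p2, r} : Finset B.Q).card = 6 := by
    simp [*]
  rw [← hc]
  exact Finset.card_le_univ _

end

end WeightedAutomaton

/-- Over a commutative semiring with elements `u, v` such that `u*v ≠ 0` and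
`u² = 0 = v²`, there is a trim bideterministic weighted automaton over a
two-letter alphabet none of whose equivalent minimal automata is
bideterministic. -/
theorem exists_trim_bideterministic_no_minimal_bideterministic_of_sq_eq_zero
    {S : Type} [CommSemiring S] (u v : S)
    (huv : u * v ≠ 0) (hu : u * u = 0) (hv : v * v = 0) :
    ∃ A : WeightedAutomaton S Bool, A.Trim ∧ A.Bideterministic ∧
      ∀ B : WeightedAutomaton S Bool,
        B.behaviour = A.behaviour → B.Minimal → ¬ B.Bideterministic := by
  have hu0 : u ≠ 0 := left_ne_zero_of_mul huv
  have hv0 : v ≠ 0 := right_ne_zero_of_mul huv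
  have h1 : (1 : S) ≠ 0 := fun h => huv (by rw [← mul_one (u * v), h, mul_zero])
  refine ⟨WeightedAutomaton.bigAut u v, WeightedAutomaton.big_trim hu0 hv0 h1,
    WeightedAutomaton.big_bidet, fun B hB hmin hbi => ?_⟩
  rw [WeightedAutomaton.big_behaviour] at hB
  have h6 := WeightedAutomaton.bidet_card hbi hB huv h1
  have h5 := hmin (WeightedAutomaton.smallAut u v)
    ((WeightedAutomaton.small_behaviour u v hu hv).trans hB.symm)
  have : (WeightedAutomaton.smallAut u v).states = 5 := Fintype.card_fin 5
  omega
end
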